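/- arXiv:1612.07898 — 5 statements merged into one kernel-verified Lean document; each statement's English description precedes it below -/
import Mathlib

section
/- Let R be a commutative ring, h a natural number, and M an h×h matrix over R. Then the characteristic polynomial of the 2h×2h block matrix with blocks (0, M; M, 0) equals the product of the characteristic polynomial of M and the characteristic polynomial of -M. -/
/-- The characteristic polynomial of the block matrix `fromBlocks 0 M M 0`
equals `charpoly M * charpoly (-M)`. -/
theorem stmt_1 {R : Type*} [CommRing R] (h : ℕ) (M : Matrix (Fin h) (Fin h) R) :
    (Matrix.fromBlocks (0 : Matrix (Fin h) (Fin h) R) M M 0).charpoly =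
      M.charpoly * (-M).charpoly := by
  have h1 : Matrix.fromBlocks (0 : Matrix (Fin h) (Fin h) R) M M 0 =
      Matrix.fromBlocks M M M 0 * Matrix.fromBlocks 1 0 (-1) 1 := by
    simp [Matrix.fromBlocks_multiply]
  have h2 : Matrix.fromBlocks (1 : Matrix (Fin h) (Fin h) R) 0 (-1) 1 *
      Matrix.fromBlocks M M M 0 = Matrix.fromBlocks M M 0 (-M) := by
    simp [Matrix.fromBlocks_multiply]
  rw [h1, Matrix.charpoly_mul_comm, h2, Matrix.charpoly_fromBlocks_zero₂₁]
end

section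
/- Let K be a field, h a natural number, and M an h×h matrix over K. A scalar μ ∈ K is a root of the characteristic polynomial of the 2h×2h block matrix with blocks (0, M; M, 0) if and only if μ or -μ is a root of the characteristic polynomial of M. -/
/-- Over a field `K`, a scalar `μ` is a root of the characteristic polynomial of
`fromBlocks 0 M M 0` iff `μ` or `-μ` is a root of the characteristic polynomial of `M`. -/
theorem stmt_2 {K : Type*} [Field K] (h : ℕ) (M : Matrix (Fin h) (Fin h) K) (μ : K) :
    (Matrix.fromBlocks (0 : Matrix (Fin h) (Fin h) K) M M 0).charpoly.IsRoot μ ↔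
      M.charpoly.IsRoot μ ∨ M.charpoly.IsRoot (-μ) := by
  simp only [Polynomial.IsRoot.def, Matrix.eval_charpoly]
  have e1 : Matrix.scalar (Fin h ⊕ Fin h) μ - Matrix.fromBlocks 0 M M 0 =
      Matrix.fromBlocks (Matrix.scalar (Fin h) μ) (-M) (-M) (Matrix.scalar (Fin h) μ) := by
    ext i j
    rcases i with i | i <;> rcases j with j | j <;>
      simp [Matrix.diagonal_apply]
  have e2 : Matrix.fromBlocks (1 : Matrix (Fin h) (Fin h) K) 0 1 1 *
      Matrix.fromBlocks (Matrix.scalar (Fin h) μ) (-M) (-M) (Matrix.scalar (Fin h) μ) *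
      Matrix.fromBlocks (1 : Matrix (Fin h) (Fin h) K) 0 (-1) 1 =
      Matrix.fromBlocks (Matrix.scalar (Fin h) μ + M) (-M) 0 (Matrix.scalar (Fin h) μ - M) := by
    rw [Matrix.fromBlocks_multiply, Matrix.fromBlocks_multiply]
    congr 1 <;> noncomm_ring
  have e3 := congrArg Matrix.det e2
  rw [Matrix.det_mul, Matrix.det_mul, Matrix.det_fromBlocks_zero₁₂, Matrix.det_fromBlocks_zero₁₂,
    Matrix.det_fromBlocks_zero₂₁] at e3
  simp only [Matrix.det_one, one_mul, mul_one] at e3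
  have e4 : Matrix.scalar (Fin h) (-μ) - M = -(Matrix.scalar (Fin h) μ + M) := by
    rw [map_neg]; abel
  rw [e1, e3, e4, Matrix.det_neg, mul_eq_zero, mul_eq_zero, or_comm]
  simp
end

section
/- Let h be a natural number, M an h×h real matrix, and N a real number. Suppose the characteristic polynomial of M factors as ∏_{i=1}^{h} (X - λᵢ) for real numbers λ₁, ..., λ_h. Then the characteristic polynomial of the 2h×2h matrix Δ := N·I - (block matrix with blocks (0, M; M, 0)) equals ∏_{i=1}^{h} (X - (N - λᵢ))·(X - (N + λᵢ)). -/
open Polynomial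

theorem det_fromBlocks_symm_aux (h : ℕ) (A B : Matrix (Fin h) (Fin h) ℝ) :
    (Matrix.fromBlocks A B B A).det = (A + B).det * (A - B).det := by
  have key : Matrix.fromBlocks 1 1 0 1 * Matrix.fromBlocks A B B A *
      Matrix.fromBlocks 1 (-1) 0 1 = Matrix.fromBlocks (A + B) 0 B (A - B) := by
    simp only [Matrix.fromBlocks_multiply]
    congr 1 <;> simp <;> abel
  have := congrArg Matrix.det key
  simpa [Matrix.det_mul, Matrix.det_fromBlocks_zero₂₁, Matrix.det_fromBlocks_zero₁₂] using this

/-- If the characteristic polynomial of `M` factors as `∏ i, (X - λ i)` over `ℝ`,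
then the characteristic polynomial of `Δ = N • I - fromBlocks 0 M M 0` equals
`∏ i, (X - (N - λ i)) * (X - (N + λ i))`. -/
theorem stmt_3 (h : ℕ) (M : Matrix (Fin h) (Fin h) ℝ) (N : ℝ) (l : Fin h → ℝ)
    (hM : M.charpoly = ∏ i : Fin h, (X - C (l i))) :
    (N • (1 : Matrix (Fin h ⊕ Fin h) (Fin h ⊕ Fin h) ℝ) -
        Matrix.fromBlocks 0 M M 0).charpoly =
      ∏ i : Fin h, ((X - C (N - l i)) * (X - C (N + l i))) := by
  have hdet : ∀ s : ℝ, (s • (1 : Matrix (Fin h) (Fin h) ℝ) - M).det = ∏ i, (s - l i) := by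
    intro s
    have := Matrix.eval_charpoly M s
    rw [hM, Polynomial.eval_prod] at this
    simpa [Matrix.smul_one_eq_diagonal] using this.symm
  have hdet2 : ∀ s : ℝ, (s • (1 : Matrix (Fin h) (Fin h) ℝ) + M).det = ∏ i, (s + l i) := by
    intro s
    have e : s • (1 : Matrix (Fin h) (Fin h) ℝ) + M = -((-s) • 1 - M) := by
      rw [neg_smul]; abel
    have e2 : ∀ i, s + l i = -1 * (-s - l i) := fun i => by ring
    rw [e, Matrix.det_neg, hdet]
    simp only [e2]
    rw [Finset.prod_mul_distrib]
    simp
  apply Polynomial.funext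
  intro t
  rw [Matrix.eval_charpoly]
  have e : Matrix.scalar (Fin h ⊕ Fin h) t -
      (N • (1 : Matrix (Fin h ⊕ Fin h) (Fin h ⊕ Fin h) ℝ) - Matrix.fromBlocks 0 M M 0) =
      Matrix.fromBlocks ((t - N) • 1) M M ((t - N) • 1) := by
    rw [Matrix.scalar_apply, ← Matrix.smul_one_eq_diagonal, ← Matrix.fromBlocks_one,
      Matrix.fromBlocks_smul, Matrix.fromBlocks_smul, sub_eq_add_neg, neg_sub,
      sub_eq_add_neg, Matrix.fromBlocks_neg, Matrix.fromBlocks_add, Matrix.fromBlocks_add]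
    congr 1 <;> simp [sub_eq_add_neg, add_smul]
  rw [e, det_fromBlocks_symm_aux, hdet, hdet2, ← Finset.prod_mul_distrib, Polynomial.eval_prod]
  refine Finset.prod_congr rfl fun i _ => ?_
  simp
  ring
end

section
/- Let h ≥ 1 be a natural number, M an h×h real matrix, and N > 0 a real number. Suppose the characteristic polynomial P of M factors over ℝ as P(X) = ∏_{i=1}^{h} (X - λᵢ) with λ₁ = N and -N < λᵢ < N for all 2 ≤ i ≤ h. Let Δ := N·I - (block matrix with blocks (0, M; M, 0)). Then 0 is a root of the characteristic polynomial of Δ of multiplicity exactly 1, and the product of the nonzero real roots of the characteristic polynomial of Δ, counted with multiplicity, equals |P(-N) · P'(N)|. -/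
open Polynomial

theorem det_block_aux {n : Type*} [Fintype n] [DecidableEq n] (A B : Matrix n n ℝ) :
    (Matrix.fromBlocks A B B A).det = (A + B).det * (A - B).det := by
  have h1 : Matrix.fromBlocks (1 : Matrix n n ℝ) 1 0 1 * Matrix.fromBlocks A B B A *
      Matrix.fromBlocks 1 (-1) 0 1 = Matrix.fromBlocks (A + B) 0 B (A - B) := by
    simp only [Matrix.fromBlocks_multiply]
    congr 1 <;> simp <;> abel
  have h2 := congrArg Matrix.det h1
  simpa [Matrix.det_mul, Matrix.det_fromBlocks_zero₂₁, Matrix.det_fromBlocks_zero₁₂] using h2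

theorem charpoly_aux (h : ℕ) (M : Matrix (Fin h) (Fin h) ℝ) (N : ℝ)
    (l : Fin h → ℝ)
    (hM : M.charpoly = ∏ i : Fin h, (X - C (l i))) :
    (N • (1 : Matrix (Fin h ⊕ Fin h) (Fin h ⊕ Fin h) ℝ) -
          Matrix.fromBlocks 0 M M 0).charpoly =
      (∏ i : Fin h, (X - C (N - l i))) * ∏ i : Fin h, (X - C (N + l i)) := by
  apply Polynomial.funext
  intro x
  have ev : ∀ y : ℝ, (y • (1 : Matrix (Fin h) (Fin h) ℝ) - M).det = ∏ i, (y - l i) := by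
    intro y
    have := Matrix.eval_charpoly M y
    rw [hM, Polynomial.eval_prod] at this
    simpa [Matrix.smul_one_eq_diagonal] using this.symm
  have hb : Matrix.scalar (Fin h ⊕ Fin h) x - (N • (1 : Matrix (Fin h ⊕ Fin h) (Fin h ⊕ Fin h) ℝ) -
          Matrix.fromBlocks 0 M M 0) = Matrix.fromBlocks ((x - N) • 1) M M ((x - N) • 1) := by
    have : Matrix.scalar (Fin h ⊕ Fin h) x = x • (1 : Matrix (Fin h ⊕ Fin h) (Fin h ⊕ Fin h) ℝ) := by
      simp [Matrix.smul_one_eq_diagonal]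
    rw [this, ← sub_add, ← sub_smul, ← Matrix.fromBlocks_one, Matrix.fromBlocks_smul,
      Matrix.fromBlocks_add]
    simp
  have hneg : (x - N) • (1 : Matrix (Fin h) (Fin h) ℝ) + M = -((N - x) • 1 - M) := by
    module
  rw [Matrix.eval_charpoly, hb, det_block_aux, ev, hneg, Matrix.det_neg, ev, Polynomial.eval_mul,
    Polynomial.eval_prod, Polynomial.eval_prod]
  have : (-1 : ℝ) ^ Fintype.card (Fin h) = ∏ _i : Fin h, (-1 : ℝ) := by simp
  rw [this, ← Finset.prod_mul_distrib]
  congr 1 <;> refine Finset.prod_congr rfl fun i _ => ?_ <;> simp <;> ring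

/-- Suppose the characteristic polynomial `P` of `M` factors over `ℝ` as
`∏ i, (X - λ i)` with `λ 0 = N > 0` and `-N < λ i < N` for `i ≠ 0` (with `h ≥ 1`).
Then `0` is a root of the characteristic polynomial of `Δ = N • I - fromBlocks 0 M M 0`
of multiplicity exactly `1`, and the product of its nonzero real roots, counted with
multiplicity, equals `|P(-N) * P'(N)|`. -/
theorem stmt_6 (h : ℕ) (hh : 0 < h) (M : Matrix (Fin h) (Fin h) ℝ) (N : ℝ) (hN : 0 < N)
    (l : Fin h → ℝ)
    (hM : M.charpoly = ∏ i : Fin h, (X - C (l i)))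
    (hl : l ⟨0, hh⟩ = N)
    (hbound : ∀ i : Fin h, i ≠ ⟨0, hh⟩ → -N < l i ∧ l i < N) :
    Polynomial.rootMultiplicity 0
        (N • (1 : Matrix (Fin h ⊕ Fin h) (Fin h ⊕ Fin h) ℝ) -
          Matrix.fromBlocks 0 M M 0).charpoly = 1 ∧
      (Multiset.filter (fun x => x ≠ 0)
          (N • (1 : Matrix (Fin h ⊕ Fin h) (Fin h ⊕ Fin h) ℝ) -
            Matrix.fromBlocks 0 M M 0).charpoly.roots).prod =
        |M.charpoly.eval (-N) * (Polynomial.derivative M.charpoly).eval N| := by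
  classical
  set i0 : Fin h := ⟨0, hh⟩ with hi0
  set S : Finset (Fin h) := Finset.univ.erase i0 with hS
  have hprod : ∀ {R : Type} [CommMonoid R] (f : Fin h → R), ∏ i, f i = f i0 * ∏ i ∈ S, f i :=
    fun f => (Finset.mul_prod_erase _ f (Finset.mem_univ i0)).symm
  set R : Multiset ℝ := S.val.map (fun i => N - l i) + Finset.univ.val.map (fun i => N + l i)
    with hR
  have hplus : ∀ i, 0 < N + l i := by
    intro i
    by_cases hi : i = i0
    · rw [hi, hl]; linarith
    · linarith [(hbound i hi).1]
  have hminus : ∀ i ∈ S, 0 < N - l i := by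
    intro i hi
    linarith [(hbound i (Finset.ne_of_mem_erase hi)).2]
  have hR0 : ∀ x ∈ R, x ≠ 0 := by
    intro x hx
    rw [hR, Multiset.mem_add, Multiset.mem_map, Multiset.mem_map] at hx
    rcases hx with ⟨i, hi, rfl⟩ | ⟨i, _, rfl⟩
    · exact (hminus i hi).ne'
    · exact (hplus i).ne'
  have hroots : (N • (1 : Matrix (Fin h ⊕ Fin h) (Fin h ⊕ Fin h) ℝ) -
          Matrix.fromBlocks 0 M M 0).charpoly.roots = 0 ::ₘ R := by
    rw [charpoly_aux h M N l hM, ← Polynomial.roots_multiset_prod_X_sub_C (0 ::ₘ R)]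
    congr 1
    rw [hprod (fun i => X - C (N - l i)), hl, hR, Multiset.map_cons, Multiset.prod_cons,
      Multiset.map_add, Multiset.prod_add, Multiset.map_map, Multiset.map_map, sub_self, mul_assoc]
    rfl
  constructor
  · rw [← Polynomial.count_roots, hroots, Multiset.count_cons_self,
      Multiset.count_eq_zero_of_notMem (fun h0 => hR0 0 h0 rfl)]
  · rw [hroots, Multiset.filter_cons_of_neg _ (by simp), Multiset.filter_eq_self.2 hR0, hR,
      Multiset.prod_add, hM, abs_mul]
    have hd : (derivative (∏ i : Fin h, (X - C (l i)))).eval N = ∏ i ∈ S, (N - l i) := by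
      rw [hprod (fun i => X - C (l i)), hl, derivative_mul]
      simp [Polynomial.eval_prod]
    have he : |(∏ i : Fin h, (X - C (l i))).eval (-N)| = ∏ i, (N + l i) := by
      rw [Polynomial.eval_prod, Finset.abs_prod]
      refine Finset.prod_congr rfl fun i _ => ?_
      rw [← abs_of_pos (hplus i), ← abs_neg]
      congr 1
      simp
      ring
    rw [hd, he, abs_of_pos (Finset.prod_pos hminus), mul_comm]
    rfl
end

section
/- Let F be a finite field, K a finite field extension of F of even degree, and γ a 2×2 matrix over F whose characteristic polynomial is irreducible over F. Then there are exactly two one-dimensional K-subspaces W of K² with γ_K·W ⊆ W, where γ_K is the matrix over K obtained by applying the inclusion F → K to the entries of γ. Equivalently, the induced action of γ on the projective line ℙ¹(K) has exactly two fixed points. -/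
open Module in
/-- If `F` is a finite field, `K/F` a finite extension of even degree, and `γ`
a 2×2 matrix over `F` with irreducible characteristic polynomial, then there are exactly two
one-dimensional `K`-subspaces `W` of `K²` with `γ_K · W ⊆ W`. -/
theorem stmt_10 {F K : Type*} [Field F] [Finite F] [Field K] [Algebra F K]
    [FiniteDimensional F K] (heven : Even (Module.finrank F K))
    (γ : Matrix (Fin 2) (Fin 2) F) (hirr : Irreducible γ.charpoly) :
    {W : Submodule K (Fin 2 → K) | Module.finrank K W = 1 ∧
      ∀ v ∈ W, (γ.map (algebraMap F K)).mulVec v ∈ W}.ncard = 2 := by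
  have hm := γ.charpoly_monic
  have hroots : ({x : K | x ∈ γ.charpoly.aroots K}).ncard = 2 := by
    have : Fact (Irreducible γ.charpoly) := ⟨hirr⟩
    have hfr : finrank F (AdjoinRoot γ.charpoly) = 2 := by
      rw [(AdjoinRoot.powerBasis hm.ne_zero).finrank, AdjoinRoot.powerBasis_dim,
        Matrix.charpoly_natDegree_eq_dim, Fintype.card_fin]
    have : FiniteDimensional F (AdjoinRoot γ.charpoly) :=
      (AdjoinRoot.powerBasis hm.ne_zero).finite
    have : Finite K := Module.finite_of_finite F
    have h := FiniteField.natCard_algHom_of_finrank_dvd (F := F)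
      (K := AdjoinRoot γ.charpoly) (L := K) (by rw [hfr]; exact heven.two_dvd)
    rw [hfr, Nat.card_congr (AdjoinRoot.equiv K F γ.charpoly hm.ne_zero)] at h
    exact h
  obtain ⟨a, b, hab, hS⟩ := Set.ncard_eq_two.1 hroots
  set M := γ.map (algebraMap F K) with hM
  set T : End K (Fin 2 → K) := Matrix.toLin' M with hT
  have hev : ∀ c, T.HasEigenvalue c ↔ c = a ∨ c = b := by
    intro c
    have h1 : c ∈ {x : K | x ∈ γ.charpoly.aroots K} ↔ c = a ∨ c = b := by rw [hS]; simp
    rw [← h1, End.hasEigenvalue_iff_isRoot_charpoly, hT, Matrix.charpoly_toLin', hM,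
      Matrix.charpoly_map]
    simp [Polynomial.mem_aroots, hm.ne_zero, Polynomial.IsRoot, Polynomial.aeval_def,
      Polynomial.eval_map]
  have ha := (hev a).2 (Or.inl rfl)
  have hb := (hev b).2 (Or.inr rfl)
  have hdis : Disjoint (T.eigenspace a) (T.eigenspace b) := by
    rw [Submodule.disjoint_def]
    intro x hxa hxb
    rw [End.mem_eigenspace_iff] at hxa hxb
    have h : (a - b) • x = 0 := by rw [sub_smul, ← hxa, ← hxb, sub_self]
    exact (smul_eq_zero.1 h).resolve_left (sub_ne_zero.2 hab)
  have hsum := Submodule.finrank_add_finrank_le_of_disjoint hdis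
  have hpa : 0 < finrank K (T.eigenspace a) := Submodule.one_le_finrank_iff.2 ha
  have hpb : 0 < finrank K (T.eigenspace b) := Submodule.one_le_finrank_iff.2 hb
  simp only [finrank_fintype_fun_eq_card, Fintype.card_fin] at hsum
  have hinv : ∀ c, ∀ v ∈ T.eigenspace c, M.mulVec v ∈ T.eigenspace c := by
    intro c v hv
    have : M.mulVec v = c • v := by
      rw [← Matrix.toLin'_apply]; exact End.mem_eigenspace_iff.1 hv
    rw [this]; exact Submodule.smul_mem _ _ hv
  refine Set.ncard_eq_two.2 ⟨T.eigenspace a, T.eigenspace b, ?_, ?_⟩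
  · intro h
    rw [h, disjoint_self] at hdis
    exact hb hdis
  · ext W
    simp only [Set.mem_ofPred_eq, Set.mem_insert_iff, Set.mem_singleton_iff]
    constructor
    · rintro ⟨h1, h2⟩
      obtain ⟨⟨v, hv⟩, hv0, hspan⟩ := finrank_eq_one_iff'.1 h1
      obtain ⟨c, hc⟩ := hspan ⟨_, h2 v hv⟩
      have hc : c • v = T v := by simpa [hT] using congrArg Subtype.val hc
      have hle : W ≤ T.eigenspace c := by
        intro w hw
        obtain ⟨d, hd⟩ := hspan ⟨w, hw⟩
        have hd : d • v = w := by simpa using congrArg Subtype.val hd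
        rw [End.mem_eigenspace_iff, ← hd, map_smul, ← hc, smul_comm]
      have hv0' : v ≠ 0 := fun h => hv0 (by simp [h])
      have hE : T.HasEigenvalue c := End.hasEigenvalue_of_hasEigenvector
        ⟨hle hv, hv0'⟩
      rcases (hev c).1 hE with rfl | rfl
      · left; exact Submodule.eq_of_le_of_finrank_eq hle (by omega)
      · right; exact Submodule.eq_of_le_of_finrank_eq hle (by omega)
    · rintro (rfl | rfl)
      · exact ⟨by omega, hinv a⟩
      · exact ⟨by omega, hinv b⟩
end
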